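/- Let 0 ≤ m ≤ n, let a_i ≥ 1 for 1 ≤ i ≤ n and b_i ≥ a_i for 1 ≤ i ≤ m be integers. Then sdepth_S((x_1^{a_1},...,x_n^{a_n})/(x_1^{b_1},...,x_m^{b_m})) = n - m - ⌊(n-m)/2⌋. -/

import Mathlib

/- Combinatorial formalization of Stanley depth for quotients `J/I` of monomial
ideals in `S = K[x_1,...,x_n]`: monomials are identified with their exponent
vectors in `Fin n → ℕ`, the `ℤⁿ`-graded module `J/I` is identified with the set
of exponent vectors of monomials in `J \ I`, and a Stanley decomposition
`⊕ uᵢ K[Zᵢ]` is identified with a partition of this set into "intervals"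
`{b | aᵢ ≤ b ∧ (b = aᵢ outside Zᵢ)}` (the exponent set of `x^{aᵢ} K[Zᵢ]`).
This correspondence is exact and the resulting Stanley depth is independent of
the field `K`. `sdepthOn V M` is the Stanley depth of `M` as a module over the
polynomial subring on the variables in `V` (e.g. `S' = K[x_2,...,x_n]`). -/

/-- The set of exponent vectors of the Stanley space `x^a · K[Z]`. -/
def SInterval {n : ℕ} (a : Fin n → ℕ) (Z : Finset (Fin n)) : Set (Fin n → ℕ) :=
  {b | a ≤ b ∧ ∀ i ∉ Z, b i = a i}

/-- A (combinatorial) Stanley decomposition of the set `M` of exponent vectors,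
using only variables from `V`. -/
def IsStanleyDecompOn {n : ℕ} (V : Finset (Fin n)) (M : Set (Fin n → ℕ)) {r : ℕ}
    (a : Fin r → Fin n → ℕ) (Z : Fin r → Finset (Fin n)) : Prop :=
  (∀ i, Z i ⊆ V) ∧ (∀ i, SInterval (a i) (Z i) ⊆ M) ∧
    (∀ x ∈ M, ∃ i, x ∈ SInterval (a i) (Z i)) ∧
    ∀ i j, i ≠ j → Disjoint (SInterval (a i) (Z i)) (SInterval (a j) (Z j))

/-- The Stanley depth of `M`, viewed over the polynomial ring on the variables in `V`. -/
noncomputable def sdepthOn {n : ℕ} (V : Finset (Fin n)) (M : Set (Fin n → ℕ)) : ℕ :=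
  sSup {d | ∃ (r : ℕ), 0 < r ∧ ∃ (a : Fin r → Fin n → ℕ) (Z : Fin r → Finset (Fin n)),
    IsStanleyDecompOn V M a Z ∧ ∀ i, d ≤ (Z i).card}

/-- The Stanley depth over the full polynomial ring `S = K[x_1,...,x_n]`. -/
noncomputable def sdepth {n : ℕ} (M : Set (Fin n → ℕ)) : ℕ := sdepthOn Finset.univ M

/-- Exponent vectors of the monomial ideal generated by the monomials `x^a`, `a ∈ A`. -/
def upSet {n : ℕ} (A : Set (Fin n → ℕ)) : Set (Fin n → ℕ) := {c | ∃ a ∈ A, a ≤ c}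

/-- `M` is the set of exponent vectors of the monomials of a monomial ideal. -/
def IsMonomialIdealSet {n : ℕ} (M : Set (Fin n → ℕ)) : Prop :=
  ∀ a ∈ M, ∀ b, a ≤ b → b ∈ M

/-- All monomials of `M` only involve the variables in `V`. -/
def SupportedOn {n : ℕ} (V : Finset (Fin n)) (M : Set (Fin n → ℕ)) : Prop :=
  ∀ c ∈ M, ∀ i ∉ V, c i = 0

/-- The support of a monomial. -/
def msupp {n : ℕ} (u : Fin n → ℕ) : Finset (Fin n) :=
  Finset.univ.filter fun i => u i ≠ 0

/-- A regular sequence of monomials: monic nonunit monomials with pairwise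
disjoint supports. -/
def IsRegSeqM {n m : ℕ} (u : Fin m → Fin n → ℕ) : Prop :=
  (∀ j, u j ≠ 0) ∧ ∀ j k, j ≠ k → Disjoint (msupp (u j)) (msupp (u k))

/-!
Sending a monomial `c` of `J / I` to `T = {i | aᵢ ≤ cᵢ}` reduces the lower bound to a partition of
the nonempty sets `T` of variables into intervals `[T \ Φ T, T ∪ Φ T]` whose tops contain at least
half of the free variables, those not bounded by `I`. Such a partition comes from bracket matching
on a cycle of odd length: going backwards from a point of `T`, every point that is neither in `T`
nor matched yet is matched with its predecessor, and `Φ T` consists of the predecessors so used.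
Since an odd cycle has no perfect matching, the interval of a nonempty set does not contain `∅`. For
an even number of free variables one is left off the cycle.

For the upper bound, each generator `xᵢ ^ aᵢ` with `xᵢ` free starts a Stanley space of its own. Two
of these spaces cannot each contain the other's variable, since both would then contain
`xᵢ ^ aᵢ * xⱼ ^ aⱼ`. The incidences therefore form a partial tournament, and some space has at most
half of the variables besides its own.
-/

section

open Finset

/-! ### Interval partitions of nonempty finsets -/

section Matching

variable {α : Type*} {σ : Equiv.Perm α} {s T T' F F' : Finset α}

/-- The map `Φ` encodes a partition of the nonempty finsets of `α` into intervals, the one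
containing `T` being `[T \ Φ T, T ∪ Φ T]`. -/
def IsIntervalPartition [DecidableEq α] (Φ : Finset α → Finset α) : Prop :=
  ∀ ⦃T⦄, T.Nonempty → ∀ ⦃T'⦄, T' \ Φ T = T \ Φ T → T'.Nonempty ∧ Φ T' = Φ T

/-- The number of steps along `σ` from `x` to the first point of `T`; it is `0` if `T` is never
reached. -/
noncomputable def hittingTime (σ : Equiv.Perm α) (T : Finset α) (x : α) : ℕ :=
  sInf {g | (σ ^ g) x ∈ T}

theorem hittingTime_of_mem {x : α} (hx : x ∈ T) : hittingTime σ T x = 0 :=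
  Nat.sInf_eq_zero.2 (.inl hx)

theorem hittingTime_of_notMem {x : α} (hex : ∃ g, (σ ^ g) x ∈ T) (hx : x ∉ T) :
    hittingTime σ T x = hittingTime σ T (σ x) + 1 := by
  have hpos : 1 ≤ hittingTime σ T x := by
    rw [Nat.one_le_iff_ne_zero, hittingTime, Ne, Nat.sInf_eq_zero, not_or]
    exact ⟨hx, Set.nonempty_iff_ne_empty.1 hex⟩
  exact (Nat.sInf_add hpos).symm

variable [DecidableEq α]

theorem union_eq_union_of_sdiff_eq_sdiff (h : T' \ F = T \ F) : T' ∪ F = T ∪ F := by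
  rw [← sdiff_union_self_eq_union, h, sdiff_union_self_eq_union]

/-- `F` is the set of predecessors used when bracket matching `T` along `σ` on `s`: every point of
`s` outside `T ∪ F` is matched with its predecessor, which lies in `F`. -/
def IsMatchedSet (σ : Equiv.Perm α) (s T F : Finset α) : Prop :=
  ∀ i, i ∈ F ↔ i ∈ s ∧ σ i ∉ T ∪ F

namespace IsMatchedSet

theorem subset (h : IsMatchedSet σ s T F) : F ⊆ s := fun i hi => ((h i).1 hi).1

theorem card_add_card_union (hσ : σ.IsCycleOn s) (hT : T ⊆ s) (h : IsMatchedSet σ s T F) :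
    #F + #(T ∪ F) = #s := by
  have hmap : F.map σ.toEmbedding = s \ (T ∪ F) := by
    ext x
    rw [mem_map_equiv, h, mem_sdiff, σ.apply_symm_apply, ← mem_coe, ← hσ.apply_mem_iff,
      σ.apply_symm_apply, mem_coe]
  rw [← card_map σ.toEmbedding, hmap]
  exact card_sdiff_add_card_eq_card (union_subset hT h.subset)

theorem unique (hσ : σ.IsCycleOn s) (hT : T ⊆ s) (hne : T.Nonempty)
    (h : IsMatchedSet σ s T F) (h' : IsMatchedSet σ s T F') : F = F' := by
  have agree : ∀ g i, (σ ^ g) (σ i) ∈ T → (i ∈ F ↔ i ∈ F') := by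
    intro g
    induction g with
    | zero =>
      intro i (hi : σ i ∈ T)
      simp [h i, h' i, hi]
    | succ g ih =>
      intro i hi
      simp [h i, h' i, ih (σ i) hi]
  obtain ⟨t, ht⟩ := hne
  ext i
  by_cases hi : i ∈ s
  · obtain ⟨g, -, hg⟩ := hσ.exists_pow_eq (hσ.apply_mem_iff.2 hi) (hT ht)
    exact agree g i (hg ▸ ht)
  · exact iff_of_false (fun hF => hi (h.subset hF)) fun hF' => hi (h'.subset hF')

theorem of_sdiff_eq_sdiff (h : IsMatchedSet σ s T F) (hT' : T' \ F = T \ F) :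
    IsMatchedSet σ s T' F := by
  rwa [IsMatchedSet, union_eq_union_of_sdiff_eq_sdiff hT']

theorem nonempty_of_odd (hσ : σ.IsCycleOn s) (hs : Odd #s) (hT : T ⊆ s)
    (h : IsMatchedSet σ s T F) : T.Nonempty := by
  rw [nonempty_iff_ne_empty]
  rintro rfl
  have hcard := h.card_add_card_union hσ hT
  rw [empty_union] at hcard
  exact Nat.not_odd_iff_even.2 ⟨_, hcard.symm⟩ hs

end IsMatchedSet

/-- The explicit solution of `IsMatchedSet σ s T`: the points of `s` whose successor is at odd
distance from `T`. -/
noncomputable def matchedSet (σ : Equiv.Perm α) (s T : Finset α) : Finset α :=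
  {i ∈ s | Odd (hittingTime σ T (σ i))}

theorem isMatchedSet_matchedSet (hσ : σ.IsCycleOn s) (hT : T ⊆ s) (hne : T.Nonempty) :
    IsMatchedSet σ s T (matchedSet σ s T) := by
  obtain ⟨t, ht⟩ := hne
  intro i
  simp only [matchedSet, mem_filter, mem_union, not_or]
  refine and_congr_right fun hi => ?_
  have hσi : σ i ∈ s := hσ.apply_mem_iff.2 hi
  by_cases hiT : σ i ∈ T
  · simp [hittingTime_of_mem hiT, hiT]
  · obtain ⟨g, -, hg⟩ := hσ.exists_pow_eq hσi (hT ht)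
    simp [hittingTime_of_notMem ⟨g, hg ▸ ht⟩ hiT, Nat.odd_add_one, hiT, hσi]

/-- The interval partition of the nonempty finsets given by bracket matching on the cycle `s`. In
the interval of a finset not contained in `s`, the part inside `s` varies freely. -/
noncomputable def matchingPartition (σ : Equiv.Perm α) (s T : Finset α) : Finset α :=
  if T ⊆ s then matchedSet σ s T else s

theorem matchingPartition_of_subset (hT : T ⊆ s) :
    matchingPartition σ s T = matchedSet σ s T :=
  if_pos hT

theorem matchingPartition_of_not_subset (hT : ¬ T ⊆ s) : matchingPartition σ s T = s :=
  if_neg hT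

theorem isIntervalPartition_matchingPartition (hσ : σ.IsCycleOn s) (hs : Odd #s) :
    IsIntervalPartition (matchingPartition σ s) := by
  intro T hne T' hTT'
  by_cases hT : T ⊆ s
  · rw [matchingPartition_of_subset hT] at hTT' ⊢
    have hF := isMatchedSet_matchedSet hσ hT hne
    have hF' := hF.of_sdiff_eq_sdiff hTT'
    have hT' : T' ⊆ s := by
      have hle : T' ⊆ T ∪ matchedSet σ s T :=
        union_eq_union_of_sdiff_eq_sdiff hTT' ▸ subset_union_left
      exact hle.trans (union_subset hT hF.subset)
    have hne' := hF'.nonempty_of_odd hσ hs hT'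
    rw [matchingPartition_of_subset hT']
    exact ⟨hne', (isMatchedSet_matchedSet hσ hT' hne').unique hσ hT' hne' hF'⟩
  · rw [matchingPartition_of_not_subset hT] at hTT' ⊢
    have hT' : ¬ T' ⊆ s := by rwa [← sdiff_eq_empty_iff_subset, hTT', sdiff_eq_empty_iff_subset]
    exact ⟨(sdiff_nonempty.2 hT').mono sdiff_subset, matchingPartition_of_not_subset hT'⟩

theorem card_lt_two_mul_card_union_matchingPartition_inter (hσ : σ.IsCycleOn s)
    (hs : Odd #s) (hne : T.Nonempty) :
    #s < 2 * #((T ∪ matchingPartition σ s T) ∩ s) := by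
  by_cases hT : T ⊆ s
  · have hF := isMatchedSet_matchedSet hσ hT hne
    have hcard := hF.card_add_card_union hσ hT
    have hle : #(matchedSet σ s T) ≤ #(T ∪ matchedSet σ s T) := card_le_card subset_union_right
    obtain ⟨k, hk⟩ := hs
    rw [matchingPartition_of_subset hT, inter_eq_left.2 (union_subset hT hF.subset)]
    lia
  · rw [matchingPartition_of_not_subset hT, inter_eq_right.2 subset_union_right]
    have := hs.pos
    lia

theorem exists_isIntervalPartition_card_le {W : Finset α} (hW : W.Nonempty) :
    ∃ Φ : Finset α → Finset α, IsIntervalPartition Φ ∧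
      ∀ T, T.Nonempty → #W ≤ 2 * #((T ∪ Φ T) ∩ W) := by
  have hpos := hW.card_pos
  obtain ⟨s, hsW, hcard⟩ := exists_subset_card_eq (s := W) (n := 2 * ((#W - 1) / 2) + 1) (by lia)
  obtain ⟨σ, hσ, -⟩ := s.countable_toSet.exists_cycleOn
  have hs : Odd #s := ⟨_, hcard⟩
  refine ⟨_, isIntervalPartition_matchingPartition hσ hs, fun T hT => ?_⟩
  have hlt := card_lt_two_mul_card_union_matchingPartition_inter hσ hs hT
  have hle := card_le_card (inter_subset_inter_left hsW (s := T ∪ matchingPartition σ s T))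
  lia

end Matching

/-! ### Asymmetric relations -/

theorem exists_two_mul_card_le_of_asymm {ι : Type*} {W : Finset ι} (hW : W.Nonempty)
    {N : ι → Finset ι} (hN : ∀ i ∈ W, N i ⊆ W)
    (hasymm : ∀ i ∈ W, ∀ j ∈ W, i ≠ j → j ∈ N i → i ∉ N j) :
    ∃ i ∈ W, 2 * #(N i) ≤ #W + 1 := by
  classical
  have hcount : ∀ i ∈ W, #(N i) + #{j ∈ W | i ∈ N j} ≤ #W + 1 := by
    intro i hi
    rw [← card_union_add_card_inter]
    gcongr
    · exact union_subset (hN i hi) (filter_subset _ _)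
    · refine card_le_card (t := {i}) fun j hj => mem_singleton.2 ?_
      obtain ⟨hji, hj⟩ := mem_inter.1 hj
      obtain ⟨hjW, hij⟩ := mem_filter.1 hj
      by_contra hne
      exact hasymm i hi j hjW (Ne.symm hne) hji hij
  have hdouble : ∑ i ∈ W, #(N i) = ∑ i ∈ W, #{j ∈ W | i ∈ N j} := by
    refine Eq.trans (sum_congr rfl fun i hi => ?_)
      (sum_card_bipartiteAbove_eq_sum_card_bipartiteBelow fun i j => j ∈ N i)
    rw [bipartiteAbove, filter_mem_eq_inter, inter_eq_right.2 (hN i hi)]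
  refine exists_le_of_sum_le hW ?_
  calc ∑ i ∈ W, 2 * #(N i) = ∑ i ∈ W, (#(N i) + #{j ∈ W | i ∈ N j}) := by
        rw [← mul_sum, sum_add_distrib, ← hdouble, two_mul]
    _ ≤ ∑ _i ∈ W, (#W + 1) := sum_le_sum hcount

/-! ### Stanley decompositions -/

theorem self_mem_SInterval {n : ℕ} (a : Fin n → ℕ) (Z : Finset (Fin n)) : a ∈ SInterval a Z :=
  ⟨le_rfl, fun _ _ => rfl⟩

theorem add_single_mem_SInterval {n : ℕ} (a : Fin n → ℕ) {Z : Finset (Fin n)} {i : Fin n}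
    (hi : i ∈ Z) (x : ℕ) : a + Pi.single i x ∈ SInterval a Z :=
  ⟨le_self_add, fun j hj => by simp [ne_of_mem_of_not_mem hi hj |>.symm]⟩

namespace IsStanleyDecompOn

variable {n r d : ℕ} {V : Finset (Fin n)} {M : Set (Fin n → ℕ)} {a : Fin r → Fin n → ℕ}
  {Z : Fin r → Finset (Fin n)}

theorem pos (h : IsStanleyDecompOn V M a Z) (hM : M.Nonempty) : 0 < r := by
  obtain ⟨x, hx⟩ := hM
  obtain ⟨p, -⟩ := h.2.2.1 x hx
  exact p.pos

theorem notMem_of_mem_of_eq_single (h : IsStanleyDecompOn V M a Z) {p q : Fin r} (hpq : p ≠ q)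
    {i j : Fin n} {x y : ℕ} (hp : a p = Pi.single i x) (hq : a q = Pi.single j y) (hj : j ∈ Z p) :
    i ∉ Z q := by
  intro hi
  have hmem_p : a p + a q ∈ SInterval (a p) (Z p) := hq ▸ add_single_mem_SInterval _ hj y
  have hmem_q : a q + a p ∈ SInterval (a q) (Z q) := hp ▸ add_single_mem_SInterval _ hi x
  exact Set.disjoint_left.1 (h.2.2.2 p q hpq) hmem_p (add_comm (a q) (a p) ▸ hmem_q)

theorem exists_start_eq_of_minimal (h : IsStanleyDecompOn V M a Z) {u : Fin n → ℕ}
    (hu : Minimal (· ∈ M) u) : ∃ p, a p = u := by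
  obtain ⟨p, hp⟩ := h.2.2.1 u hu.prop
  exact ⟨p, hu.eq_of_le (h.2.1 p (self_mem_SInterval _ _)) hp.1⟩

theorem le_sdepthOn (h : IsStanleyDecompOn V M a Z) (hr : 0 < r) (hd : ∀ p, d ≤ #(Z p)) :
    d ≤ sdepthOn V M := by
  refine le_csSup ⟨#V, ?_⟩ ⟨r, hr, a, Z, h, hd⟩
  rintro e ⟨r', hr', a', Z', h', he⟩
  exact (he ⟨0, hr'⟩).trans (card_le_card (h'.1 _))

end IsStanleyDecompOn

theorem exists_isStanleyDecompOn_of_assignment {n : ℕ} {V : Finset (Fin n)} {M : Set (Fin n → ℕ)}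
    (f : (Fin n → ℕ) → (Fin n → ℕ) × Finset (Fin n)) (hfin : (f '' M).Finite)
    (hV : ∀ c ∈ M, (f c).2 ⊆ V) (hself : ∀ c ∈ M, c ∈ SInterval (f c).1 (f c).2)
    (hf : ∀ c ∈ M, ∀ c' ∈ SInterval (f c).1 (f c).2, c' ∈ M ∧ f c' = f c) :
    ∃ (r : ℕ) (a : Fin r → Fin n → ℕ) (Z : Fin r → Finset (Fin n)),
      IsStanleyDecompOn V M a Z ∧ ∀ p, ∃ c ∈ M, Z p = (f c).2 := by
  have := hfin.to_subtype
  let e := Finite.equivFin (f '' M)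
  have hsurj : ∀ p, ∃ c ∈ M, f c = (e.symm p).1 := fun p => (e.symm p).2
  have hmem : ∀ p, ∀ x ∈ SInterval (e.symm p).1.1 (e.symm p).1.2, x ∈ M ∧ f x = (e.symm p).1 := by
    intro p
    obtain ⟨c, hc, hfc⟩ := hsurj p
    exact hfc ▸ hf c hc
  have hfree : ∀ p, ∃ c ∈ M, (e.symm p).1.2 = (f c).2 := by
    intro p
    obtain ⟨c, hc, hfc⟩ := hsurj p
    exact ⟨c, hc, congrArg Prod.snd hfc.symm⟩
  refine ⟨_, fun p => (e.symm p).1.1, fun p => (e.symm p).1.2,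
    ⟨fun p => ?_, fun p x hx => (hmem p x hx).1, fun x hx => ?_, fun p q hpq => ?_⟩, hfree⟩
  · obtain ⟨c, hc, hZ⟩ := hfree p
    exact hZ.trans_subset (hV c hc)
  · refine ⟨e ⟨f x, x, hx, rfl⟩, ?_⟩
    simpa only [e.symm_apply_apply] using hself x hx
  · refine Set.disjoint_left.2 fun x hxp hxq => hpq (e.symm.injective (Subtype.ext ?_))
    rw [← (hmem p x hxp).2, (hmem q x hxq).2]

theorem sdepthOn_le {n d : ℕ} {V : Finset (Fin n)} {M : Set (Fin n → ℕ)}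
    (h : ∀ (r : ℕ) (a : Fin r → Fin n → ℕ) (Z : Fin r → Finset (Fin n)),
      0 < r → IsStanleyDecompOn V M a Z → ∃ p, #(Z p) ≤ d) : sdepthOn V M ≤ d := by
  refine csSup_le' ?_
  rintro e ⟨r, hr, a, Z, hdec, he⟩
  obtain ⟨p, hp⟩ := h r a Z hr hdec
  exact (he p).trans hp

/-! ### Quotients of irreducible monomial ideals -/

/-- The exponent vectors of the monomials in `J` but not in `I`, where `J` is generated by all the
`xᵢ ^ aᵢ` and `I` by the `xᵢ ^ bᵢ` with `i ∈ V`. The ideal `I` need not lie in `J`, in which case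
this set represents `(I + J) / I`. -/
def purePowerQuotient {n : ℕ} (V : Finset (Fin n)) (a b : Fin n → ℕ) : Set (Fin n → ℕ) :=
  {c | ∃ i, a i ≤ c i} \ {c | ∃ i ∈ V, b i ≤ c i}

/-- The variables `xᵢ` for which `xᵢ ^ aᵢ` divides the monomial with exponent vector `c`. -/
def reachedSet {n : ℕ} (a c : Fin n → ℕ) : Finset (Fin n) := {i | a i ≤ c i}

/-- The generator of the Stanley space of `c` attached to an interval partition with value `F` at
`reachedSet a c`: exponents of variables in `V` are kept, those of variables in `F` are set to `0`,
and all others are truncated at `a`. -/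
def truncStart {n : ℕ} (V F : Finset (Fin n)) (a c : Fin n → ℕ) : Fin n → ℕ :=
  fun i => if i ∈ V then c i else if i ∈ F then 0 else min (c i) (a i)

section PurePowerQuotient

variable {n r : ℕ} {V F : Finset (Fin n)} {a b c c' : Fin n → ℕ}

theorem mem_SInterval_truncStart :
    c' ∈ SInterval (truncStart V F a c) ((reachedSet a c ∪ F) \ V) ↔
      (∀ i ∈ V, c' i = c i) ∧ ∀ i ∉ F, min (c' i) (a i) = min (c i) (a i) := by
  simp only [SInterval, Set.mem_ofPred_eq, Pi.le_def, ← forall_and]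
  refine forall_congr' fun i => ?_
  simp only [truncStart, reachedSet, mem_sdiff, mem_union, mem_filter, mem_univ, true_and]
  by_cases hiV : i ∈ V <;> by_cases hiF : i ∈ F <;>
    simp only [hiV, hiF, if_true, if_false, or_true, or_false, not_true, not_false_eq_true,
      and_true, and_false, true_imp_iff, false_imp_iff, true_and] <;> lia

theorem truncStart_congr (hV : ∀ i ∈ V, c' i = c i)
    (hF : ∀ i ∉ F, min (c' i) (a i) = min (c i) (a i)) :
    truncStart V F a c' = truncStart V F a c := by
  funext i
  unfold truncStart
  split_ifs with hiV hiF
  exacts [hV i hiV, rfl, hF i hiF]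

theorem truncStart_le (F : Finset (Fin n)) (hc : c ∈ purePowerQuotient V a b) :
    truncStart V F a c ≤ a + b := by
  intro i
  simp only [truncStart, Pi.add_apply]
  split_ifs with hiV hiF
  · have hlt : c i < b i := not_le.1 fun hbi => hc.2 ⟨i, hiV, hbi⟩
    lia
  · exact Nat.zero_le _
  · lia

theorem reachedSet_sdiff_congr (hF : ∀ i ∉ F, min (c' i) (a i) = min (c i) (a i)) :
    reachedSet a c' \ F = reachedSet a c \ F := by
  ext i
  simp only [reachedSet, mem_sdiff, mem_filter, mem_univ, true_and]
  refine and_congr_left fun hi => ?_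
  rw [← min_eq_right_iff, hF i hi, min_eq_right_iff]

theorem reachedSet_nonempty : (reachedSet a c).Nonempty ↔ ∃ i, a i ≤ c i := by
  simp [reachedSet, Finset.Nonempty]

theorem exists_isStanleyDecompOn_purePowerQuotient (V : Finset (Fin n)) (a b : Fin n → ℕ)
    {Φ : Finset (Fin n) → Finset (Fin n)} (hΦ : IsIntervalPartition Φ) :
    ∃ (r : ℕ) (u : Fin r → Fin n → ℕ) (Z : Fin r → Finset (Fin n)),
      IsStanleyDecompOn univ (purePowerQuotient V a b) u Z ∧
        ∀ p, ∃ T, T.Nonempty ∧ Z p = (T ∪ Φ T) \ V := by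
  let f (c : Fin n → ℕ) : (Fin n → ℕ) × Finset (Fin n) :=
    (truncStart V (Φ (reachedSet a c)) a c, (reachedSet a c ∪ Φ (reachedSet a c)) \ V)
  have hfin : (f '' purePowerQuotient V a b).Finite := by
    refine ((Set.finite_Iic (a + b)).prod Set.finite_univ).subset ?_
    rintro _ ⟨c, hc, rfl⟩
    exact ⟨truncStart_le _ hc, trivial⟩
  have hself : ∀ c, c ∈ SInterval (f c).1 (f c).2 := fun c =>
    mem_SInterval_truncStart.2 ⟨fun _ _ => rfl, fun _ _ => rfl⟩
  have hf : ∀ c ∈ purePowerQuotient V a b, ∀ c' ∈ SInterval (f c).1 (f c).2,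
      c' ∈ purePowerQuotient V a b ∧ f c' = f c := by
    rintro c ⟨hc, hcb⟩ c' hc'
    obtain ⟨hV, hF⟩ := mem_SInterval_truncStart.1 hc'
    have hT := reachedSet_sdiff_congr hF
    obtain ⟨hne, hΦeq⟩ := hΦ (reachedSet_nonempty.2 hc) hT
    refine ⟨⟨reachedSet_nonempty.1 hne, ?_⟩, ?_⟩
    · rintro ⟨i, hi, hbi⟩
      exact hcb ⟨i, hi, hV i hi ▸ hbi⟩
    · simp only [f, hΦeq, truncStart_congr hV hF]
      rw [union_eq_union_of_sdiff_eq_sdiff hT]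
  obtain ⟨r, u, Z, hdec, hZ⟩ := exists_isStanleyDecompOn_of_assignment f hfin
    (fun _ _ => subset_univ _) (fun c _ => hself c) hf
  refine ⟨r, u, Z, hdec, fun p => ?_⟩
  obtain ⟨c, hc, hZp⟩ := hZ p
  exact ⟨_, reachedSet_nonempty.2 hc.1, hZp⟩

theorem single_mem_purePowerQuotient (a : Fin n → ℕ) (hb : ∀ i ∈ V, 1 ≤ b i) {i : Fin n}
    (hi : i ∉ V) : Pi.single i (a i) ∈ purePowerQuotient V a b := by
  refine ⟨⟨i, by simp⟩, ?_⟩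
  rintro ⟨j, hj, hbj⟩
  rw [Pi.single_eq_of_ne (ne_of_mem_of_not_mem hj hi)] at hbj
  exact absurd (hb j hj) (by lia)

theorem minimal_single_purePowerQuotient (ha : ∀ i, 1 ≤ a i) (hb : ∀ i ∈ V, 1 ≤ b i) {i : Fin n}
    (hi : i ∉ V) : Minimal (· ∈ purePowerQuotient V a b) (Pi.single i (a i)) := by
  refine ⟨single_mem_purePowerQuotient a hb hi, ?_⟩
  rintro c ⟨⟨j, hj⟩, -⟩ hc
  obtain rfl : j = i := by
    by_contra hne
    have := (ha j).trans (hj.trans (hc j))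
    simp [hne] at this
  intro l
  obtain rfl | hl := eq_or_ne l j
  · simpa using hj
  · simp [hl]

theorem subset_compl_of_SInterval_subset {u : Fin n → ℕ} {Z : Finset (Fin n)}
    (h : SInterval u Z ⊆ purePowerQuotient V a b) : Z ⊆ Vᶜ := by
  intro i hi
  rw [mem_compl]
  intro hiV
  exact (h (add_single_mem_SInterval u hi (b i))).2 ⟨i, hiV, by simp⟩

theorem exists_two_mul_card_free_le (ha : ∀ i, 1 ≤ a i) (hb : ∀ i ∈ V, 1 ≤ b i) (hr : 0 < r)
    {u : Fin r → Fin n → ℕ} {Z : Fin r → Finset (Fin n)}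
    (h : IsStanleyDecompOn univ (purePowerQuotient V a b) u Z) :
    ∃ p, 2 * #(Z p) ≤ #Vᶜ + 1 := by
  have hfree : ∀ p, Z p ⊆ Vᶜ := fun p => subset_compl_of_SInterval_subset (h.2.1 p)
  have : Nonempty (Fin r) := ⟨⟨0, hr⟩⟩
  obtain hV | hV := Vᶜ.eq_empty_or_nonempty
  · refine ⟨⟨0, hr⟩, ?_⟩
    simp [subset_empty.1 (hV ▸ hfree ⟨0, hr⟩)]
  have hstart : ∀ i ∈ Vᶜ, ∃ p, u p = Pi.single i (a i) := fun i hi =>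
    h.exists_start_eq_of_minimal (minimal_single_purePowerQuotient ha hb (mem_compl.1 hi))
  choose! p hp using hstart
  have hinj : ∀ i ∈ Vᶜ, ∀ j ∈ Vᶜ, i ≠ j → p i ≠ p j := by
    intro i hi j hj hij heq
    have hsingle : (Pi.single i (a i) : Fin n → ℕ) = Pi.single j (a j) := by
      rw [← hp i hi, heq, hp j hj]
    have hai := congrFun hsingle i
    rw [Pi.single_eq_same, Pi.single_eq_of_ne hij] at hai
    exact absurd (ha i) (by lia)
  obtain ⟨i, -, hi⟩ := exists_two_mul_card_le_of_asymm hV (fun i _ => hfree (p i))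
    fun i hi j hj hij => h.notMem_of_mem_of_eq_single (hinj i hi j hj hij) (hp i hi) (hp j hj)
  exact ⟨p i, hi⟩

theorem sdepth_purePowerQuotient_le (ha : ∀ i, 1 ≤ a i) (hb : ∀ i ∈ V, 1 ≤ b i) :
    sdepth (purePowerQuotient V a b) ≤ #Vᶜ - #Vᶜ / 2 := by
  refine sdepthOn_le fun r u Z hr h => ?_
  obtain ⟨p, hp⟩ := exists_two_mul_card_free_le ha hb hr h
  exact ⟨p, by lia⟩

theorem le_sdepth_purePowerQuotient (a : Fin n → ℕ) (hb : ∀ i ∈ V, 1 ≤ b i) :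
    #Vᶜ - #Vᶜ / 2 ≤ sdepth (purePowerQuotient V a b) := by
  obtain hV | hV := Vᶜ.eq_empty_or_nonempty
  · simp [hV]
  obtain ⟨Φ, hΦ, hcard⟩ := exists_isIntervalPartition_card_le hV
  obtain ⟨r, u, Z, hdec, hZ⟩ := exists_isStanleyDecompOn_purePowerQuotient V a b hΦ
  obtain ⟨i, hi⟩ := hV
  have hM := single_mem_purePowerQuotient a hb (mem_compl.1 hi)
  refine hdec.le_sdepthOn (hdec.pos ⟨_, hM⟩) fun p => ?_
  obtain ⟨T, hT, hZp⟩ := hZ p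
  have hT' := hcard T hT
  rw [hZp, sdiff_eq_inter_compl]
  lia

end PurePowerQuotient

theorem stmt_7_general {n : ℕ} (V : Finset (Fin n)) (a b : Fin n → ℕ) (ha : ∀ i, 1 ≤ a i)
    (hb : ∀ i ∈ V, 1 ≤ b i) :
    sdepth ({c : Fin n → ℕ | ∃ i, a i ≤ c i} \ {c | ∃ i ∈ V, b i ≤ c i}) =
      n - #V - (n - #V) / 2 := by
  have hcard : #Vᶜ = n - #V := by rw [card_compl, Fintype.card_fin]
  rw [← hcard]
  exact le_antisymm (sdepth_purePowerQuotient_le ha hb) (le_sdepth_purePowerQuotient a hb)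

end

/-- `sdepth_S((x_1^{a_1},...,x_n^{a_n})/(x_1^{b_1},...,x_m^{b_m}))
= n - m - ⌊(n-m)/2⌋` for `0 ≤ m ≤ n`, `a_i ≥ 1`, `b_i ≥ a_i`. -/
theorem stmt_7 {n m : ℕ} (hmn : m ≤ n) (a b : Fin n → ℕ) (ha : ∀ i, 1 ≤ a i)
    (hab : ∀ i : Fin n, (i : ℕ) < m → a i ≤ b i) :
    sdepth ({c : Fin n → ℕ | ∃ i, a i ≤ c i} \
        {c | ∃ i : Fin n, (i : ℕ) < m ∧ b i ≤ c i}) =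
      n - m - (n - m) / 2 := by
  simpa [Fin.card_filter_val_lt, hmn] using
    stmt_7_general {i : Fin n | (i : ℕ) < m} a b ha fun i hi =>
      (ha i).trans (hab i (by simpa using hi))
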